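/- (Lemma 2.2(i)) Let 𝔤 be of type A_2. For every 𝐜 = (c_1,c_2,c_3) ∈ ℕ^3, the monomial M = E_{α_1}^{(c_2)} E_{α_2}^{(c_1+c_2)} E_{α_1}^{(c_3)} satisfies M = E_𝐜 + ∑_{𝐝 ∈ ℕ^3, 𝐝 > 𝐜} ξ_𝐝 E_𝐝 with ξ_𝐝 ∈ ℤ[q,q^{-1}]; i.e. f(𝐜) = (c_2, c_1+c_2, c_3) works in Theorem 1(i) for type A_2. -/

import Mathlib

/-!
Common setup for the quantized enveloping algebra `U_q(𝔤)` of Chari–Xi,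
"Monomial bases of quantized enveloping algebras".

The base field is `𝔽 = ℚ(q)`, realized as `RatFunc ℚ` with `q = X`.  Given the Cartan matrix
`a : Fin n → Fin n → ℤ` and symmetrizing integers `d : Fin n → ℕ`, the algebra `U = U n a d`
is presented by generators `E i`, `F i`, `K i`, `K i ⁻¹` and the defining relations of
Proposition 1.1 of the paper.  `Uplus` is the subalgebra generated by the `E i`,
`Ediv i m = E i ^ m / [m]_{d i}!` are the divided powers, `𝒜 = ℤ[q,q⁻¹] ⊆ 𝔽`, and
`UA` is the `𝒜`-subalgebra generated by the divided powers.

Lusztig's braid automorphisms are abstracted as a family `T` of algebra automorphisms,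
constrained by the predicate `IsBraid` recording Lusztig's formulas on generators (which
determine `T` uniquely).  For a word `w` (a reduced expression) the PBW root vectors and PBW
monomials are `rootVec T w t m` (`= T_{i₁} ⋯ T_{i_t}(E_{i_{t+1}}^{(m)})`) and
`pbw T w [c₁, …, c_r] = E_{β₁}^{(c₁)} ⋯ E_{β_r}^{(c_r)}`, while
`mono w [c₁, …, c_r] = E_{α_{i₁}}^{(c₁)} ⋯ E_{α_{i_r}}^{(c_r)}` is a monomial in divided
powers of the Chevalley generators.

The root-lattice combinatorics is handled by `sRefl` (simple reflections acting on
coordinates w.r.t. the simple roots), `rootAt w t` (`= s_{i₁} ⋯ s_{i_t}(α_{i_{t+1}})`) and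
`applyWord`; a word is a reduced expression iff all the roots `rootAt w t` are positive
(`IsReducedWord`), and a reduced word represents the longest element `w₀` iff it moreover
sends every simple root to a negative root (`IsLongestWord`).
-/

noncomputable section
namespace ChariXi

/-- The base field `ℚ(q)`. -/
abbrev 𝔽 : Type := RatFunc ℚ

/-- The indeterminate `q`. -/
def qq : 𝔽 := RatFunc.X

/-- The quantum integer `[m]_d = (q^{dm} - q^{-dm})/(q^d - q^{-d})`. -/
def qInt (dd m : ℕ) : 𝔽 := (qq ^ (dd * m) - qq⁻¹ ^ (dd * m)) / (qq ^ dd - qq⁻¹ ^ dd)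

/-- The quantum factorial `[m]_d!`. -/
def qFact (dd : ℕ) : ℕ → 𝔽
  | 0 => 1
  | m + 1 => qInt dd (m + 1) * qFact dd m

/-- The quantum binomial coefficient `[m choose r]_d`. -/
def qBinom (dd m r : ℕ) : 𝔽 := qFact dd m / (qFact dd r * qFact dd (m - r))

/-- `𝒜 = ℤ[q,q⁻¹]` as a subring of `ℚ(q)`. -/
def 𝒜 : Subring 𝔽 := Subring.closure {qq, qq⁻¹}

/-- `ℤ[q⁻¹]` as a subring of `ℚ(q)`. -/
def 𝒜inv : Subring 𝔽 := Subring.closure {qq⁻¹}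

/-- `q⁻¹ ℤ[q⁻¹] ⊆ ℚ(q)`. -/
def qinvZqinv : Set 𝔽 := {x | ∃ y ∈ 𝒜inv, x = qq⁻¹ * y}

/-- Generators of `U_q(𝔤)`. -/
inductive Gen (n : ℕ) : Type
  | E : Fin n → Gen n
  | F : Fin n → Gen n
  | K : Fin n → Gen n
  | Kinv : Fin n → Gen n

variable (n : ℕ)

namespace Fr
/-- `E_{α_i}` in the free algebra. -/
def E (i : Fin n) : FreeAlgebra 𝔽 (Gen n) := FreeAlgebra.ι 𝔽 (Gen.E i)
/-- `F_{α_i}` in the free algebra. -/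
def F (i : Fin n) : FreeAlgebra 𝔽 (Gen n) := FreeAlgebra.ι 𝔽 (Gen.F i)
/-- `K_i` in the free algebra. -/
def K (i : Fin n) : FreeAlgebra 𝔽 (Gen n) := FreeAlgebra.ι 𝔽 (Gen.K i)
/-- `K_i⁻¹` in the free algebra. -/
def Kinv (i : Fin n) : FreeAlgebra 𝔽 (Gen n) := FreeAlgebra.ι 𝔽 (Gen.Kinv i)
end Fr

variable (a : Fin n → Fin n → ℤ) (d : Fin n → ℕ)

/-- The hypotheses on the Cartan data `(aᵢⱼ)`, `(dᵢ)` of a finite-dimensional complex simple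
Lie algebra used in the paper:  `aᵢᵢ = 2`, `aᵢⱼ ≤ 0` for `i ≠ j`, `(dᵢ aᵢⱼ)` is symmetric and
`dᵢ ∈ {1,2,3}`. -/
structure IsCartan : Prop where
  diag : ∀ i, a i i = 2
  offdiag : ∀ i j, i ≠ j → a i j ≤ 0
  symmetrizable : ∀ i j, (d i : ℤ) * a i j = (d j : ℤ) * a j i
  dmem : ∀ i, d i ∈ ({1, 2, 3} : Set ℕ)

/-- The defining relations of `U_q(𝔤)` (Proposition 1.1 of the paper). -/
inductive Rel : FreeAlgebra 𝔽 (Gen n) → FreeAlgebra 𝔽 (Gen n) → Prop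
  | KKinv (i : Fin n) : Rel (Fr.K n i * Fr.Kinv n i) 1
  | KinvK (i : Fin n) : Rel (Fr.Kinv n i * Fr.K n i) 1
  | KK (i j : Fin n) : Rel (Fr.K n i * Fr.K n j) (Fr.K n j * Fr.K n i)
  | KE (i j : Fin n) :
      Rel (Fr.K n i * Fr.E n j) ((qq ^ ((d i : ℤ) * a i j)) • (Fr.E n j * Fr.K n i))
  | KF (i j : Fin n) :
      Rel (Fr.K n i * Fr.F n j) ((qq ^ (-((d i : ℤ) * a i j))) • (Fr.F n j * Fr.K n i))
  | EF (i j : Fin n) :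
      Rel (Fr.E n i * Fr.F n j - Fr.F n j * Fr.E n i)
        (if i = j then (qq ^ (d i) - qq⁻¹ ^ (d i))⁻¹ • (Fr.K n i - Fr.Kinv n i) else 0)
  | serreE (i j : Fin n) (h : i ≠ j) :
      Rel (∑ r ∈ Finset.range ((1 - a i j).toNat + 1),
            ((-1 : 𝔽) ^ r * qBinom (d i) (1 - a i j).toNat r) •
              (Fr.E n i ^ r * Fr.E n j * Fr.E n i ^ ((1 - a i j).toNat - r))) 0
  | serreF (i j : Fin n) (h : i ≠ j) :
      Rel (∑ r ∈ Finset.range ((1 - a i j).toNat + 1),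
            ((-1 : 𝔽) ^ r * qBinom (d i) (1 - a i j).toNat r) •
              (Fr.F n i ^ r * Fr.F n j * Fr.F n i ^ ((1 - a i j).toNat - r))) 0

/-- The quantized enveloping algebra `U_q(𝔤)` over `ℚ(q)`. -/
abbrev U := RingQuot (Rel n a d)

/-- The quotient map. -/
def mk : FreeAlgebra 𝔽 (Gen n) →ₐ[𝔽] U n a d := RingQuot.mkAlgHom 𝔽 (Rel n a d)

/-- The Chevalley generator `E_{α_i}`. -/
def Eg (i : Fin n) : U n a d := mk n a d (Fr.E n i)
/-- The Chevalley generator `F_{α_i}`. -/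
def Fg (i : Fin n) : U n a d := mk n a d (Fr.F n i)
/-- The torus generator `K_i`. -/
def Kg (i : Fin n) : U n a d := mk n a d (Fr.K n i)
/-- The torus generator `K_i⁻¹`. -/
def Kinvg (i : Fin n) : U n a d := mk n a d (Fr.Kinv n i)

/-- The divided power `E_{α_i}^{(m)} = E_{α_i}^m / [m]_{dᵢ}!`. -/
def Ediv (i : Fin n) (m : ℕ) : U n a d := (qFact (d i) m)⁻¹ • Eg n a d i ^ m
/-- The divided power `F_{α_i}^{(m)}`. -/
def Fdiv (i : Fin n) (m : ℕ) : U n a d := (qFact (d i) m)⁻¹ • Fg n a d i ^ m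
/-- Integer powers `K_i^z`. -/
def Kzpow (i : Fin n) (z : ℤ) : U n a d :=
  if 0 ≤ z then Kg n a d i ^ z.toNat else Kinvg n a d i ^ (-z).toNat

/-- `U⁺`, the `ℚ(q)`-subalgebra generated by the `E_{α_i}`. -/
def Uplus : Subalgebra 𝔽 (U n a d) := Algebra.adjoin 𝔽 (Set.range (Eg n a d))

/-- The integral form `U_𝒜⁺`: the `ℤ[q,q⁻¹]`-subalgebra of `U⁺` generated by the divided
powers `E_{α_i}^{(m)}`. -/
def UA : Subalgebra 𝒜 (U n a d) :=
  Algebra.adjoin 𝒜 {x : U n a d | ∃ i m, x = Ediv n a d i m}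

/-- The homogeneous component `U⁺_ν` of `U⁺`:  the span of the monomials in the `E_{α_i}`
in which `i` occurs exactly `ν i` times (extended to integer `ν`, with `U⁺_ν = 0` if some
`ν i < 0`). -/
def wtSpace (ν : Fin n → ℤ) : Submodule 𝔽 (U n a d) :=
  Submodule.span 𝔽
    {x : U n a d | ∃ l : List (Fin n),
      x = (l.map (Eg n a d)).prod ∧ ∀ i, (l.count i : ℤ) = ν i}

/-- Lusztig's formulas for the braid group operator `Tᵢ` on generators; these determine the
automorphism `Tᵢ` uniquely. -/
structure IsBraid (T : Fin n → U n a d ≃ₐ[𝔽] U n a d) : Prop where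
  TEself : ∀ i m, T i (Ediv n a d i m)
      = ((-1 : 𝔽) ^ m * (qq ^ (m * (m - 1)))⁻¹) • (Kinvg n a d i ^ m * Fdiv n a d i m)
  TFself : ∀ i m, T i (Fdiv n a d i m)
      = ((-1 : 𝔽) ^ m * qq ^ (m * (m - 1))) • (Ediv n a d i m * Kg n a d i ^ m)
  TE : ∀ i j m, i ≠ j → T i (Ediv n a d j m)
      = ∑ s ∈ Finset.range (m * (-(a i j)).toNat + 1),
          ((-1 : 𝔽) ^ s * (qq ^ s)⁻¹) •
            (Ediv n a d i s * Ediv n a d j m * Ediv n a d i (m * (-(a i j)).toNat - s))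
  TF : ∀ i j m, i ≠ j → T i (Fdiv n a d j m)
      = ∑ s ∈ Finset.range (m * (-(a i j)).toNat + 1),
          ((-1 : 𝔽) ^ s * qq ^ s) •
            (Fdiv n a d i (m * (-(a i j)).toNat - s) * Fdiv n a d j m * Fdiv n a d i s)
  TK : ∀ i j, T i (Kg n a d j) = Kg n a d j * Kzpow n a d i (-(a i j))

variable (T : Fin n → U n a d ≃ₐ[𝔽] U n a d)

/-- The PBW root vector `E_{β_{t+1}}^{(m)} = T_{i₁} ⋯ T_{i_t} (E_{α_{i_{t+1}}}^{(m)})`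
associated to position `t` (0-based) of the word `w = [i₁, i₂, …]`. -/
def rootVec : List (Fin n) → ℕ → ℕ → U n a d
  | [], _, _ => 1
  | i :: _, 0, m => Ediv n a d i m
  | i :: w, t + 1, m => T i (rootVec w t m)

/-- The PBW monomial `E_𝐜 = E_{β₁}^{(c₁)} ⋯ E_{β_r}^{(c_r)}` for the word `w` and exponent
list `cs`. -/
def pbw : List (Fin n) → List ℕ → U n a d
  | _, [] => 1
  | [], _ => 1
  | i :: w, c :: cs => Ediv n a d i c * T i (pbw w cs)

/-- The monomial `M_𝐜 = E_{α_{j₁}}^{(c₁)} ⋯ E_{α_{j_r}}^{(c_r)}` in divided powers of the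
Chevalley generators, for the word `w = [j₁, …, j_r]`. -/
def mono : List (Fin n) → List ℕ → U n a d
  | _, [] => 1
  | [], _ => 1
  | i :: w, c :: cs => Ediv n a d i c * mono w cs

/-- `d_β` for the root `β` in position `t` of the word `w`: equals `d_{i_{t+1}}`. -/
def dAt : List (Fin n) → ℕ → ℕ
  | [], _ => 1
  | i :: _, 0 => d i
  | _ :: w, t + 1 => dAt w t

/-- The simple root `α_i` in coordinates. -/
def simpleRoot (i : Fin n) : Fin n → ℤ := fun k => if k = i then 1 else 0

/-- The simple reflection `s_i` acting on the root lattice: `s_i α_j = α_j - a_{ij} α_i`. -/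
def sRefl (i : Fin n) (v : Fin n → ℤ) : Fin n → ℤ :=
  fun k => v k - (if k = i then ∑ j, a i j * v j else 0)

/-- The positive root `β_{t+1} = s_{i₁} ⋯ s_{i_t} (α_{i_{t+1}})` associated to position `t`
(0-based) of the word `w`. -/
def rootAt : List (Fin n) → ℕ → (Fin n → ℤ)
  | [], _ => 0
  | i :: _, 0 => simpleRoot n i
  | i :: w, t + 1 => sRefl n a i (rootAt w t)

/-- The action of the word `w = [i₁, …, i_r]`, i.e. of `s_{i₁} ⋯ s_{i_r}`, on the root
lattice. -/
def applyWord : List (Fin n) → (Fin n → ℤ) → (Fin n → ℤ)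
  | [], v => v
  | i :: w, v => sRefl n a i (applyWord w v)

/-- A word is a reduced expression iff all the associated roots `β_t` are positive. -/
def IsReducedWord (w : List (Fin n)) : Prop :=
  ∀ t < w.length, ∀ i, 0 ≤ rootAt n a w t i

/-- A word is a reduced expression of the longest element `w₀` iff it is reduced and sends
every simple root to a negative root. -/
def IsLongestWord (w : List (Fin n)) : Prop :=
  IsReducedWord n a w ∧ ∀ i j, applyWord n a w (simpleRoot n i) j ≤ 0

/-- Strict lexicographic order on `ℕ^r`, with `(1,0,…,0) > (0,1,…,0) > ⋯ > (0,…,0,1)`: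
`c < e` iff at the first index where they differ, `e` is larger. -/
def lexLt {r : ℕ} (c e : Fin r → ℕ) : Prop :=
  ∃ t : Fin r, (∀ s : Fin r, s < t → c s = e s) ∧ c t < e t

/-- Reflexive lexicographic order on `ℕ^r`. -/
def lexLe {r : ℕ} (c e : Fin r → ℕ) : Prop := c = e ∨ lexLt c e

end ChariXi

namespace ChariXi

theorem qq_ne_zero : qq ≠ 0 := RatFunc.X_ne_zero

theorem qq_pow_ne_one {m : ℕ} (hm : m ≠ 0) : qq ^ m ≠ 1 := by
  intro h
  have h' : (algebraMap (Polynomial ℚ) (RatFunc ℚ)) (Polynomial.X ^ m)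
      = algebraMap (Polynomial ℚ) (RatFunc ℚ) 1 := by
    simpa [qq] using h
  have hX := RatFunc.algebraMap_injective ℚ h'
  have := congrArg Polynomial.natDegree hX
  simp at this
  exact hm this

theorem qq_pow_sub_ne_zero {m : ℕ} (hm : m ≠ 0) : qq ^ m - qq⁻¹ ^ m ≠ 0 := by
  intro h
  apply qq_pow_ne_one (m := m + m) (by omega)
  have hq : qq ^ m ≠ 0 := pow_ne_zero _ qq_ne_zero
  rw [pow_add]
  nth_rewrite 2 [sub_eq_zero.mp h]
  rw [inv_pow, mul_inv_cancel₀ hq]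

theorem qq_sub_ne_zero : qq - qq⁻¹ ≠ 0 := by
  simpa using qq_pow_sub_ne_zero one_ne_zero

theorem qInt_ne_zero {m : ℕ} (hm : m ≠ 0) : qInt 1 m ≠ 0 := by
  unfold qInt
  rw [one_mul, pow_one, pow_one]
  exact div_ne_zero (qq_pow_sub_ne_zero hm) qq_sub_ne_zero

@[simp] theorem qInt_zero : qInt 1 0 = 0 := by simp [qInt]

@[simp] theorem qInt_one : qInt 1 1 = 1 := by
  simpa [qInt] using div_self qq_sub_ne_zero

theorem qInt_add (k l : ℕ) :
    qInt 1 (k + l) = qq⁻¹ ^ l * qInt 1 k + qq ^ k * qInt 1 l := by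
  have hl : qq ^ l * qq⁻¹ ^ l = 1 := by
    rw [← mul_pow, mul_inv_cancel₀ qq_ne_zero, one_pow]
  simp only [qInt, one_mul, pow_one, mul_div_assoc', ← add_div]
  congr 1
  rw [pow_add, pow_add]
  ring

theorem qFact_ne_zero (m : ℕ) : qFact 1 m ≠ 0 := by
  induction m with
  | zero => exact one_ne_zero
  | succ m ih => exact mul_ne_zero (qInt_ne_zero m.succ_ne_zero) ih

theorem qq_mem : qq ∈ 𝒜 := Subring.subset_closure (by simp)

theorem qq_inv_mem : qq⁻¹ ∈ 𝒜 := Subring.subset_closure (by simp)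

/-- Gaussian binomial coefficients are Laurent polynomials with integer coefficients. -/
theorem qFact_add_div_mem (a b : ℕ) :
    qFact 1 (a + b) / (qFact 1 a * qFact 1 b) ∈ 𝒜 := by
  induction a generalizing b with
  | zero =>
    rw [Nat.zero_add, show qFact 1 0 = 1 from rfl, one_mul, div_self (qFact_ne_zero b)]
    exact 𝒜.one_mem
  | succ a iha =>
    induction b with
    | zero =>
      rw [Nat.add_zero, show qFact 1 0 = 1 from rfl, mul_one, div_self (qFact_ne_zero _)]
      exact 𝒜.one_mem
    | succ b ihb =>
      have key : qFact 1 (a + 1 + (b + 1)) / (qFact 1 (a + 1) * qFact 1 (b + 1))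
          = qq⁻¹ ^ (b + 1) * (qFact 1 (a + (b + 1)) / (qFact 1 a * qFact 1 (b + 1)))
            + qq ^ (a + 1) * (qFact 1 (a + 1 + b) / (qFact 1 (a + 1) * qFact 1 b)) := by
        have h1 : qFact 1 (a + 1 + (b + 1))
            = qInt 1 (a + 1 + (b + 1)) * qFact 1 (a + 1 + b) := rfl
        have h2 : qFact 1 (a + (b + 1)) = qFact 1 (a + 1 + b) := by
          rw [show a + (b + 1) = a + 1 + b by omega]
        have ha : qFact 1 (a + 1) = qInt 1 (a + 1) * qFact 1 a := rfl
        have hb : qFact 1 (b + 1) = qInt 1 (b + 1) * qFact 1 b := rfl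
        rw [h1, h2, qInt_add, ha, hb]
        have := qFact_ne_zero a
        have := qFact_ne_zero b
        have := qInt_ne_zero a.succ_ne_zero
        have := qInt_ne_zero b.succ_ne_zero
        field_simp
      rw [key]
      exact 𝒜.add_mem (𝒜.mul_mem (𝒜.pow_mem qq_inv_mem _) (iha _))
        (𝒜.mul_mem (𝒜.pow_mem qq_mem _) ihb)

section QuantumPlane

variable {A : Type*} [Ring A] [Algebra 𝔽 A]

/-- The divided power `x^m / [m]!`. -/
def divPow (x : A) (m : ℕ) : A := (qFact 1 m)⁻¹ • x ^ m

@[simp] theorem divPow_zero (x : A) : divPow x 0 = 1 := by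
  simp [divPow, qFact]

theorem divPow_one (x : A) : divPow x 1 = x := by
  simp [divPow, qFact]

theorem map_divPow {B : Type*} [Ring B] [Algebra 𝔽 B] (f : A →ₐ[𝔽] B) (x : A) (m : ℕ) :
    f (divPow x m) = divPow (f x) m := by
  simp [divPow]

theorem qInt_smul_divPow_succ (x : A) (m : ℕ) :
    qInt 1 (m + 1) • divPow x (m + 1) = divPow x m * x := by
  have h := qInt_ne_zero m.succ_ne_zero
  rw [divPow, divPow, smul_smul, smul_mul_assoc, ← pow_succ]
  congr 1
  rw [show qFact 1 (m + 1) = qInt 1 (m + 1) * qFact 1 m from rfl, mul_inv, ← mul_assoc,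
    mul_inv_cancel₀ h, one_mul]

theorem mul_divPow_self (x : A) (m : ℕ) : x * divPow x m = divPow x m * x := by
  rw [divPow, mul_smul_comm, smul_mul_assoc, ← pow_succ, ← pow_succ']

theorem divPow_mul_divPow (x : A) (a b : ℕ) :
    divPow x a * divPow x b
      = (qFact 1 (a + b) / (qFact 1 a * qFact 1 b)) • divPow x (a + b) := by
  have := qFact_ne_zero (a + b)
  have := qFact_ne_zero a
  have := qFact_ne_zero b
  simp only [divPow, smul_mul_smul_comm, ← pow_add, smul_smul]
  congr 1
  field_simp

variable {x y z : A}

theorem mul_divPow_of_qcomm (hxz : x * z = qq • (z * x)) (k : ℕ) :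
    x * divPow z k = qq ^ k • (divPow z k * x) := by
  have h : x * z ^ k = qq ^ k • (z ^ k * x) := by
    induction k with
    | zero => simp
    | succ k ih =>
      rw [pow_succ, ← mul_assoc, ih, smul_mul_assoc, mul_assoc, hxz, mul_smul_comm, smul_smul,
        ← pow_succ, mul_assoc]
  rw [divPow, mul_smul_comm, h, smul_mul_assoc, smul_comm]

theorem mul_divPow_succ_of_qcomm (hxy : x * y = z + qq⁻¹ • (y * x))
    (hzy : z * y = qq • (y * z)) (n : ℕ) :
    x * divPow y (n + 1) = qq⁻¹ ^ (n + 1) • (divPow y (n + 1) * x) + divPow y n * z := by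
  have h : ∀ n : ℕ,
      x * y ^ (n + 1) = qq⁻¹ ^ (n + 1) • (y ^ (n + 1) * x) + qInt 1 (n + 1) • (y ^ n * z) := by
    intro n
    induction n with
    | zero => simp [hxy, add_comm]
    | succ n ih =>
      rw [pow_succ y (n + 1), ← mul_assoc, ih, add_mul, smul_mul_assoc, smul_mul_assoc, mul_assoc,
        mul_assoc, hxy, hzy, mul_add, smul_add, mul_smul_comm, mul_smul_comm, smul_smul,
        smul_smul, ← pow_succ, ← mul_assoc, ← mul_assoc, ← pow_succ, ← pow_succ,
        add_assoc, add_left_comm, ← add_smul]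
      congr 2
      rw [add_comm (n + 1) 1, qInt_add 1 (n + 1), qInt_one, pow_one, mul_one, mul_comm]
  have hn := qInt_ne_zero n.succ_ne_zero
  have hf : (qFact 1 (n + 1))⁻¹ * qInt 1 (n + 1) = (qFact 1 n)⁻¹ := by
    rw [show qFact 1 (n + 1) = qInt 1 (n + 1) * qFact 1 n from rfl, mul_inv_rev, mul_assoc,
      inv_mul_cancel₀ hn, mul_one]
  rw [divPow, divPow, mul_smul_comm, h, smul_add, smul_smul _ (qInt 1 (n + 1)), hf,
    smul_mul_assoc, smul_mul_assoc, smul_comm]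

/-- Straightening of `x^{(m)} y^{(p+m)}` in the algebra `xy = z + q⁻¹yx`, `xz = qzx`,
`zy = qyz`. -/
theorem divPow_mul_divPow_add (hxy : x * y = z + qq⁻¹ • (y * x))
    (hxz : x * z = qq • (z * x)) (hzy : z * y = qq • (y * z)) (m p : ℕ) :
    divPow x m * divPow y (p + m)
      = ∑ kl ∈ Finset.HasAntidiagonal.antidiagonal m,
          qq⁻¹ ^ (kl.2 * (p + kl.2)) •
            (divPow y (p + kl.2) * divPow z kl.1 * divPow x kl.2) := by
  induction m generalizing p with
  | zero => simp
  | succ m ih =>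
    have hm := qInt_ne_zero m.succ_ne_zero
    apply smul_right_injective A hm
    set g : ℕ × ℕ → A := fun kl => qq⁻¹ ^ (kl.2 * (p + kl.2)) •
      (divPow y (p + kl.2) * divPow z kl.1 * divPow x kl.2) with hg
    have hsplit : qInt 1 (m + 1) • ∑ kl ∈ Finset.HasAntidiagonal.antidiagonal (m + 1), g kl
        = ∑ kl ∈ Finset.HasAntidiagonal.antidiagonal m,
            ((qq⁻¹ ^ kl.2 * qInt 1 (kl.1 + 1)) • g (kl.1 + 1, kl.2)
              + (qq ^ kl.1 * qInt 1 (kl.2 + 1)) • g (kl.1, kl.2 + 1)) := by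
      have : qInt 1 (m + 1) • ∑ kl ∈ Finset.HasAntidiagonal.antidiagonal (m + 1), g kl
          = ∑ kl ∈ Finset.HasAntidiagonal.antidiagonal (m + 1), (qq⁻¹ ^ kl.2 * qInt 1 kl.1) • g kl
            + ∑ kl ∈ Finset.HasAntidiagonal.antidiagonal (m + 1), (qq ^ kl.1 * qInt 1 kl.2) • g kl := by
        rw [← Finset.sum_add_distrib, Finset.smul_sum]
        refine Finset.sum_congr rfl fun kl hkl => ?_
        rw [← add_smul, ← qInt_add, Finset.HasAntidiagonal.mem_antidiagonal.mp hkl]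
      rw [this, Finset.Nat.sum_antidiagonal_succ, Finset.Nat.sum_antidiagonal_succ',
        Finset.sum_add_distrib]
      simp
    change qInt 1 (m + 1) • _ = qInt 1 (m + 1) • _
    rw [hsplit, ← smul_mul_assoc, qInt_smul_divPow_succ, ← mul_divPow_self, mul_assoc,
      show p + (m + 1) = p + 1 + m by omega, ih, Finset.mul_sum]
    refine Finset.sum_congr rfl fun kl _ => ?_
    obtain ⟨k, l⟩ := kl
    simp only [hg]
    have h1 : x * (divPow y (p + 1 + l) * divPow z k * divPow x l)
        = (qq⁻¹ ^ (p + 1 + l) * qq ^ k * qInt 1 (l + 1)) •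
            (divPow y (p + (l + 1)) * divPow z k * divPow x (l + 1))
          + qInt 1 (k + 1) • (divPow y (p + l) * divPow z (k + 1) * divPow x l) := by
      rw [show p + 1 + l = p + l + 1 by omega, ← add_assoc p l 1, ← mul_assoc, ← mul_assoc,
        mul_divPow_succ_of_qcomm hxy hzy, add_mul, add_mul, mul_assoc _ z, mul_divPow_self,
        ← qInt_smul_divPow_succ, smul_mul_assoc, mul_assoc _ x, mul_divPow_of_qcomm hxz]
      simp only [mul_smul_comm, smul_mul_assoc, smul_smul, mul_assoc]
      rw [mul_divPow_self x l, ← qInt_smul_divPow_succ]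
      simp only [mul_smul_comm, smul_smul, mul_assoc]
    rw [mul_smul_comm, h1, smul_add, smul_smul, smul_smul, smul_smul, smul_smul, add_comm]
    congr 2
    · ring
    · ring

end QuantumPlane

/-- `U_q(𝔰𝔩₃)`. -/
abbrev U3 := U 2 ![![2,-1],![-1,2]] ![1,1]

local notation "E₁" => Eg 2 ![![2,-1],![-1,2]] ![1,1] 0
local notation "E₂" => Eg 2 ![![2,-1],![-1,2]] ![1,1] 1
local notation "F₂" => Fg 2 ![![2,-1],![-1,2]] ![1,1] 1
local notation "K₂" => Kg 2 ![![2,-1],![-1,2]] ![1,1] 1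
local notation "Kinv₂" => Kinvg 2 ![![2,-1],![-1,2]] ![1,1] 1

/-! The ring and module instances on `U3` agree with those inferred by `rw` only after unfolding
`RingQuot`, so these general facts are restated for `U3`. -/

theorem U3.sub_smul (r s : 𝔽) (u : U3) : (r - s) • u = r • u - s • u := _root_.sub_smul r s u

theorem U3.neg_smul (r : 𝔽) (u : U3) : -r • u = -(r • u) := _root_.neg_smul r u

theorem U3.mul_neg (u v : U3) : u * -v = -(u * v) := _root_.mul_neg u v

theorem U3.neg_mul (u v : U3) : -u * v = -(u * v) := _root_.neg_mul u v

theorem Ediv_eq_divPow (i : Fin 2) (m : ℕ) :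
    Ediv 2 ![![2,-1],![-1,2]] ![1,1] i m = divPow (Eg 2 ![![2,-1],![-1,2]] ![1,1] i) m := by
  fin_cases i <;> rfl

theorem mk_rel {u v : FreeAlgebra 𝔽 (Gen 2)} (h : Rel 2 ![![2,-1],![-1,2]] ![1,1] u v) :
    mk 2 ![![2,-1],![-1,2]] ![1,1] u = mk 2 ![![2,-1],![-1,2]] ![1,1] v :=
  RingQuot.mkAlgHom_rel 𝔽 h

theorem qInt_two : qInt 1 2 = qq + qq⁻¹ := by
  have h := qInt_add 1 1
  simp only [qInt_one, pow_one, mul_one] at h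
  rw [h, add_comm]

theorem serre (i j : Fin 2) (h : i ≠ j) :
    let x := Eg 2 ![![2,-1],![-1,2]] ![1,1] i
    let y := Eg 2 ![![2,-1],![-1,2]] ![1,1] j
    y * (x * x) - (qq + qq⁻¹) • (x * (y * x)) + x * (x * y) = 0 := by
  have hij : (![![2,-1],![-1,2]] : Fin 2 → Fin 2 → ℤ) i j = -1 := by
    fin_cases i <;> fin_cases j <;> simp_all
  have hi : (![1,1] : Fin 2 → ℕ) i = 1 := by fin_cases i <;> rfl
  have hr := mk_rel (Rel.serreE i j h)
  have h2 : (1 - (-1 : ℤ)).toNat = 2 := rfl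
  have b0 : qBinom 1 2 0 = 1 := by
    simpa [qBinom, qFact] using div_self (qFact_ne_zero 2)
  have b2 : qBinom 1 2 2 = 1 := by
    simpa [qBinom, qFact] using div_self (qFact_ne_zero 2)
  have b1 : qBinom 1 2 1 = qq + qq⁻¹ := by
    simp [qBinom, qFact, qInt_two]
  rw [hij, hi, h2] at hr
  simp only [Finset.sum_range_succ, Finset.sum_range_zero, b0, b1, b2, map_add, map_smul, map_mul,
    map_pow, map_zero] at hr
  intro x y
  change 0 + (_ : 𝔽) • (x ^ 0 * y * x ^ 2) + (_ : 𝔽) • (x ^ 1 * y * x ^ 1)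
    + (_ : 𝔽) • (x ^ 2 * y * x ^ 0) = 0 at hr
  simp only [pow_zero, pow_one, one_mul, mul_one, zero_add, one_smul, pow_two, neg_mul, neg_neg,
    mul_assoc] at hr
  rw [← hr, sub_eq_add_neg, U3.neg_smul]

/-- The root vector `E_{α₁+α₂} = T₂(E_{α₁})`. -/
def E₁₂ : U3 := E₁ * E₂ - qq⁻¹ • (E₂ * E₁)

theorem E₁_mul_E₂ : E₁ * E₂ = E₁₂ + qq⁻¹ • (E₂ * E₁) := by
  rw [E₁₂, sub_add_cancel]

theorem E₁_mul_E₁₂ : E₁ * E₁₂ = qq • (E₁₂ * E₁) := by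
  have h := serre 0 1 (by decide)
  simp only at h
  rw [← sub_eq_zero, ← h, E₁₂]
  simp only [mul_sub, sub_mul, smul_sub, mul_smul_comm, smul_mul_assoc, smul_smul,
    mul_inv_cancel₀ qq_ne_zero, one_smul, add_smul, mul_assoc]
  abel

theorem E₁₂_mul_E₂ : E₁₂ * E₂ = qq • (E₂ * E₁₂) := by
  have h := serre 1 0 (by decide)
  simp only at h
  rw [← sub_eq_zero, ← h, E₁₂]
  simp only [mul_sub, sub_mul, smul_sub, mul_smul_comm, smul_mul_assoc, smul_smul,
    mul_inv_cancel₀ qq_ne_zero, one_smul, add_smul, mul_assoc]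
  abel

theorem K₂_mul_Kinv₂ : K₂ * Kinv₂ = 1 := by
  simpa [Kg, Kinvg] using mk_rel (Rel.KKinv 1)

theorem Kinv₂_mul_K₂ : Kinv₂ * K₂ = 1 := by
  simpa [Kg, Kinvg] using mk_rel (Rel.KinvK 1)

theorem K₂_mul_E₁ : K₂ * E₁ = qq⁻¹ • (E₁ * K₂) := by
  have h := mk_rel (Rel.KE 1 0)
  simpa [Kg, Eg] using h

theorem K₂_mul_E₂ : K₂ * E₂ = qq ^ 2 • (E₂ * K₂) := by
  have h := mk_rel (Rel.KE 1 1)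
  simpa [Kg, Eg, zpow_ofNat] using h

theorem E₂_mul_F₂ : E₂ * F₂ = F₂ * E₂ + (qq - qq⁻¹)⁻¹ • (K₂ - Kinv₂) := by
  have h := mk_rel (Rel.EF 1 1)
  rw [← sub_eq_iff_eq_add']
  simpa [Kg, Kinvg, Eg, Fg] using h

theorem E₁_mul_F₂ : E₁ * F₂ = F₂ * E₁ := by
  have h := mk_rel (Rel.EF 0 1)
  rw [← sub_eq_zero]
  simpa [Eg, Fg] using h

theorem mul_Kinv₂_of_K₂_mul {u : U3} {r : 𝔽} (h : K₂ * u = r • (u * K₂)) :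
    u * Kinv₂ = r • (Kinv₂ * u) := by
  calc u * Kinv₂ = Kinv₂ * (K₂ * u) * Kinv₂ := by rw [← mul_assoc, Kinv₂_mul_K₂, one_mul]
    _ = r • (Kinv₂ * u) := by
      rw [h, mul_smul_comm, smul_mul_assoc, ← mul_assoc, mul_assoc _ K₂, K₂_mul_Kinv₂, mul_one]

theorem K₂_mul_E₁₂ : K₂ * E₁₂ = qq • (E₁₂ * K₂) := by
  have h1 : K₂ * (E₁ * E₂) = qq • (E₁ * E₂ * K₂) := by
    rw [← mul_assoc, K₂_mul_E₁, smul_mul_assoc, mul_assoc, K₂_mul_E₂, mul_smul_comm, smul_smul,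
      mul_assoc, pow_two, inv_mul_cancel_left₀ qq_ne_zero]
  have h2 : K₂ * (E₂ * E₁) = qq • (E₂ * E₁ * K₂) := by
    rw [← mul_assoc, K₂_mul_E₂, smul_mul_assoc, mul_assoc, K₂_mul_E₁, mul_smul_comm, smul_smul,
      mul_assoc, pow_two, mul_assoc, mul_inv_cancel₀ qq_ne_zero, mul_one]
  rw [E₁₂, mul_sub, mul_smul_comm, h1, h2, sub_mul, smul_sub, smul_mul_assoc, smul_comm]

theorem E₁₂_mul_F₂ : E₁₂ * F₂ = F₂ * E₁₂ + K₂ * E₁ := by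
  have hK : E₁ * K₂ = qq • (K₂ * E₁) := by
    rw [K₂_mul_E₁, smul_smul, mul_inv_cancel₀ qq_ne_zero, one_smul]
  have hK' : E₁ * Kinv₂ = qq⁻¹ • (Kinv₂ * E₁) := mul_Kinv₂_of_K₂_mul K₂_mul_E₁
  have h1 : E₁ * E₂ * F₂
      = F₂ * (E₁ * E₂) + (qq - qq⁻¹)⁻¹ • (qq • (K₂ * E₁) - qq⁻¹ • (Kinv₂ * E₁)) := by
    rw [mul_assoc, E₂_mul_F₂, mul_add, ← mul_assoc, E₁_mul_F₂, mul_smul_comm, mul_sub, hK, hK',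
      mul_assoc]
  have h2 : E₂ * E₁ * F₂
      = F₂ * (E₂ * E₁) + (qq - qq⁻¹)⁻¹ • (K₂ * E₁ - Kinv₂ * E₁) := by
    rw [mul_assoc, E₁_mul_F₂, ← mul_assoc, E₂_mul_F₂, add_mul, smul_mul_assoc, sub_mul, mul_assoc]
  have h3 : (qq - qq⁻¹)⁻¹ • (qq • (K₂ * E₁) - qq⁻¹ • (K₂ * E₁)) = K₂ * E₁ := by
    rw [← U3.sub_smul, smul_smul, inv_mul_cancel₀ qq_sub_ne_zero, one_smul]
  rw [← h3, E₁₂, sub_mul, smul_mul_assoc, h1, h2, mul_sub, mul_smul_comm]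
  simp only [smul_sub, smul_add, smul_comm qq⁻¹ (qq - qq⁻¹)⁻¹]
  abel

section Braid

variable {T : Fin 2 → U3 ≃ₐ[𝔽] U3}

theorem IsBraid.map_Eg_of_ne (hT : IsBraid 2 ![![2,-1],![-1,2]] ![1,1] T) {i j : Fin 2}
    (h : i ≠ j) :
    T i (Eg 2 ![![2,-1],![-1,2]] ![1,1] j)
      = Eg 2 ![![2,-1],![-1,2]] ![1,1] j * Eg 2 ![![2,-1],![-1,2]] ![1,1] i
        - qq⁻¹ • (Eg 2 ![![2,-1],![-1,2]] ![1,1] i * Eg 2 ![![2,-1],![-1,2]] ![1,1] j) := by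
  have hij : (![![2,-1],![-1,2]] : Fin 2 → Fin 2 → ℤ) i j = -1 := by
    fin_cases i <;> fin_cases j <;> simp_all
  have hE := hT.TE i j 1 h
  simp only [hij, Ediv_eq_divPow, divPow_one] at hE
  simpa [Finset.sum_range_succ, divPow_one, sub_eq_add_neg, U3.neg_smul] using hE

theorem IsBraid.map_E₂ (hT : IsBraid 2 ![![2,-1],![-1,2]] ![1,1] T) :
    T 1 E₂ = -(Kinv₂ * F₂) := by
  have h := hT.TEself 1 1
  simpa [Ediv_eq_divPow, divPow_one, Fdiv, qFact, U3.neg_smul] using h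

theorem IsBraid.map_map_E₂ (hT : IsBraid 2 ![![2,-1],![-1,2]] ![1,1] T) :
    T 1 (T 0 E₂) = E₁ := by
  have h12 : T 1 E₁ = E₁₂ := hT.map_Eg_of_ne (by decide)
  have hz : E₁₂ * Kinv₂ = qq • (Kinv₂ * E₁₂) := mul_Kinv₂_of_K₂_mul K₂_mul_E₁₂
  rw [hT.map_Eg_of_ne (by decide), map_sub, map_smul, map_mul, map_mul, h12, hT.map_E₂, U3.mul_neg,
    ← mul_assoc, hz, smul_mul_assoc, smul_neg, smul_smul, inv_mul_cancel₀ qq_ne_zero, one_smul,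
    mul_assoc, E₁₂_mul_F₂, mul_add, ← mul_assoc Kinv₂ K₂, Kinv₂_mul_K₂, one_mul, U3.neg_mul, mul_assoc]
  abel

theorem IsBraid.pbw_eq (hT : IsBraid 2 ![![2,-1],![-1,2]] ![1,1] T) (a b c : ℕ) :
    pbw 2 ![![2,-1],![-1,2]] ![1,1] T [1, 0, 1] [a, b, c]
      = divPow E₂ a * divPow E₁₂ b * divPow E₁ c := by
  have h12 : T 1 E₁ = E₁₂ := hT.map_Eg_of_ne (by decide)
  have hmap : ∀ (i : Fin 2) (u : U3) (m : ℕ), T i (divPow u m) = divPow (T i u) m :=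
    fun i u m => map_divPow (T i : U3 →ₐ[𝔽] U3) u m
  simp only [pbw, Ediv_eq_divPow, map_mul, map_one, mul_one, hmap, h12, hT.map_map_E₂, mul_assoc]

end Braid

end ChariXi

/-!
STATEMENT 9 (Lemma 2.2(i), type `A₂`): for every `𝐜 = (c₁,c₂,c₃) ∈ ℕ³` the monomial
`M = E_{α₁}^{(c₂)} E_{α₂}^{(c₁+c₂)} E_{α₁}^{(c₃)}` satisfies
`M = E_𝐜 + ∑_{𝐝 > 𝐜} ξ_𝐝 E_𝐝` with `ξ_𝐝 ∈ ℤ[q,q⁻¹]`, i.e. `f(𝐜) = (c₂, c₁+c₂, c₃)`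
works in Theorem 1(i) for type `A₂`.

Here `n = 2`, the simple roots `α₁, α₂` are indexed `0, 1 : Fin 2`, the Cartan matrix is
`![![2,-1],![-1,2]]` with `d = (1,1)`, the reduced expressions are `jw = s₁s₂s₁ = [0,1,0]`
and `iw = s₂s₁s₂ = [1,0,1]`, and `E_𝐜` are the PBW monomials built on `iw`.
-/

open ChariXi

theorem chariXi_lemma22_i
    (T : Fin 2 → U 2 ![![2,-1],![-1,2]] ![1,1] ≃ₐ[𝔽] U 2 ![![2,-1],![-1,2]] ![1,1])
    (hT : IsBraid 2 ![![2,-1],![-1,2]] ![1,1] T)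
    (c : Fin 3 → ℕ) :
    ∃ (s : Finset (Fin 3 → ℕ)) (ξ : (Fin 3 → ℕ) → 𝔽),
      (∀ e ∈ s, lexLt c e ∧ ξ e ∈ 𝒜) ∧
      mono 2 ![![2,-1],![-1,2]] ![1,1] [0, 1, 0] [c 1, c 0 + c 1, c 2]
        = pbw 2 ![![2,-1],![-1,2]] ![1,1] T [1, 0, 1] (List.ofFn c)
          + ∑ e ∈ s, ξ e • pbw 2 ![![2,-1],![-1,2]] ![1,1] T [1, 0, 1] (List.ofFn e) := by
  have hc : List.ofFn c = [c 0, c 1, c 2] := by simp [List.ofFn_succ]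
  refine ⟨(Finset.range (c 1)).image fun l => ![c 0 + (l + 1), c 1 - (l + 1), l + 1 + c 2],
    fun e => qq⁻¹ ^ ((e 0 - c 0) * e 0)
      * (qFact 1 (e 0 - c 0 + c 2) / (qFact 1 (e 0 - c 0) * qFact 1 (c 2))), ?_, ?_⟩
  · intro e he
    refine ⟨?_, 𝒜.mul_mem (𝒜.pow_mem qq_inv_mem _) (qFact_add_div_mem _ _)⟩
    obtain ⟨l, -, rfl⟩ := Finset.mem_image.mp he
    exact ⟨0, fun s hs => absurd hs (Fin.not_lt_zero s), by simp⟩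
  · rw [Finset.sum_image, hc, hT.pbw_eq]
    · simp only [mono, Ediv_eq_divPow, mul_one]
      rw [← mul_assoc, divPow_mul_divPow_add E₁_mul_E₂ E₁_mul_E₁₂ E₁₂_mul_E₂,
        ← Finset.Nat.sum_antidiagonal_swap, Finset.Nat.sum_antidiagonal_eq_sum_range_succ_mk,
        Finset.sum_range_succ', add_comm, add_mul, Finset.sum_mul]
      congr 1
      · simp
      · refine Finset.sum_congr rfl fun l _ => ?_
        have he : List.ofFn ![c 0 + (l + 1), c 1 - (l + 1), l + 1 + c 2]
            = [c 0 + (l + 1), c 1 - (l + 1), l + 1 + c 2] := by simp [List.ofFn_succ]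
        rw [he, hT.pbw_eq]
        simp only [Prod.swap_prod_mk, Matrix.cons_val_zero, Nat.add_sub_cancel_left]
        rw [smul_mul_assoc, mul_assoc _ _ (divPow _ (c 2)), divPow_mul_divPow, mul_smul_comm,
          smul_smul]
    · intro l _ l' _ h
      have := congrFun h 0
      simpa using this
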